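/- Let n ≥ 1, let X be a complex Banach space that is uniformly c-convex with modulus Ω, where Ω is moreover a Dini majorant, and let α ∈ (0,1]. If f : 𝔹ⁿ → X is holomorphic and the real-valued function z ↦ ‖f(z)‖ belongs to Λ_α(𝔹ⁿ, ℝ), then f ∈ Lip(ω̄_α, 𝔹ⁿ, X), where ω̄_α(t) = Ω̃(t^α); that is, there is a constant C such that ‖f(a) − f(b)‖ ≤ C·Ω̃(‖a − b‖^α) for all a, b ∈ 𝔹ⁿ. -/

import Mathlib

/-!
The proof has two halves: uniform c-convexity bounds the derivative of `f`, and a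
Hardy-Littlewood argument integrates that bound.

*Derivative bound.* Let `‖z‖ ≤ 1 - r` and let `h` be a unit vector. On the circle of radius
`R = r / 2` the function `g ζ = f (z + ζ h)` has norm at most `‖f z‖ + c r ^ α`, by the Hölder
condition on `‖f‖`. Averaging `g` against the positive kernel `1 + Re (lam e ^ (-iθ))` shows that
`‖g 0 + lam (R / 2) g' 0‖` obeys the same bound whenever `|lam| ≤ 1`
(`norm_add_smul_deriv_le`). Uniform c-convexity, made homogeneous in
`norm_le_of_uniformly_c_convex`, turns this into `‖f' z‖ ≤ C Ω (r ^ α) / r` (`norm_fderiv_le`);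
here `f` is bounded, because `‖f‖` is Hölder continuous on a bounded set.

*Integration.* By the mean value inequality, `‖f u - f v‖ ≤ C Ω (r ^ α)` for points `u, v` in the
closed ball of radius `1 - r` at distance at most `r`. Given `a, b` with `t = ‖a - b‖ ≤ 1`, go from
`a` to `(1 - t) a`, then to `(1 - t) b`, then to `b`. The middle step costs `C Ω (t ^ α)`, which is
at most `C Ω̃ (t ^ α)`. A radial step is split at the points `(1 - t / 2 ^ k) a`
and costs `C ∑ Ω (q ^ (k + 1) t ^ α)` with `q = 2 ^ (-α)`; this sum is at most a multiple of
`Ω̃ (t ^ α)`, since `(1 - q) Ω (q s) ≤ Ω̃ s - Ω̃ (q s)` (`norm_sub_radial_le`).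
-/


open Metric Set Filter

/-- A majorant: continuous, increasing, vanishing at `0`, with `t ↦ ω t / t`
nonincreasing on `(0, ∞)`. -/
def Majorant (ω : ℝ → ℝ) : Prop :=
  ContinuousOn ω (Set.Ici 0) ∧ MonotoneOn ω (Set.Ici 0) ∧ ω 0 = 0 ∧
    AntitoneOn (fun t => ω t / t) (Set.Ioi 0)

/-- A Dini majorant: a majorant with `∫₀¹ ω t / t dt < ∞`. -/
def DiniMajorant (ω : ℝ → ℝ) : Prop :=
  Majorant ω ∧ MeasureTheory.IntegrableOn (fun t => ω t / t) (Set.Ioc 0 1)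

/-- `ω̃ t = ∫₀ᵗ ω x / x dx`. -/
noncomputable def omegaTilde (ω : ℝ → ℝ) (t : ℝ) : ℝ :=
  ∫ x in Set.Ioc 0 t, ω x / x

/-! ### Majorants and the function `ω̃` -/

lemma Majorant.nonneg {ω : ℝ → ℝ} (h : Majorant ω) {t : ℝ} (ht : 0 ≤ t) : 0 ≤ ω t := by
  have := h.2.1 (Set.mem_Ici.2 le_rfl) (Set.mem_Ici.2 ht) ht
  rwa [h.2.2.1] at this

lemma Majorant.mul_le {ω : ℝ → ℝ} (h : Majorant ω) {c t : ℝ} (hc : 1 ≤ c) (ht : 0 < t) :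
    ω (c * t) ≤ c * ω t := by
  have hct : 0 < c * t := by positivity
  have := h.2.2.2 (Set.mem_Ioi.2 ht) (Set.mem_Ioi.2 hct) (by nlinarith)
  simp only at this
  rw [div_le_div_iff₀ hct ht] at this
  have h2 : ω (c * t) * t ≤ (c * ω t) * t := by linarith
  exact le_of_mul_le_mul_right h2 ht

lemma DiniMajorant.integrableOn {ω : ℝ → ℝ} (h : DiniMajorant ω) (t : ℝ) :
    MeasureTheory.IntegrableOn (fun x => ω x / x) (Set.Ioc 0 t) := by
  have h2 : MeasureTheory.IntegrableOn (fun x => ω x / x) (Set.Icc 1 t) := by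
    apply ContinuousOn.integrableOn_Icc
    apply ContinuousOn.div
    · exact h.1.1.mono fun x hx => Set.mem_Ici.2 (by linarith [hx.1])
    · exact continuousOn_id
    · intro x hx
      have := hx.1
      linarith
  refine (h.2.union h2).mono_set fun x hx => ?_
  rcases le_total x 1 with h1 | h1
  · exact Or.inl ⟨hx.1, h1⟩
  · exact Or.inr ⟨h1, hx.2⟩

/-- On `(s, t]` the integrand of `ω̃` is at least `ω s / t`. Summed over a geometric sequence
`q ^ k * T`, where `s / t = q`, this compares `∑ ω (q ^ k * T)` with `ω̃ T`. -/
lemma DiniMajorant.sub_le {ω : ℝ → ℝ} (h : DiniMajorant ω) {s t : ℝ} (hs : 0 ≤ s) (hst : s ≤ t)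
    (ht : 0 < t) : (1 - s / t) * ω s ≤ omegaTilde ω t - omegaTilde ω s := by
  have e : omegaTilde ω t = omegaTilde ω s + ∫ x in Set.Ioc s t, ω x / x := by
    unfold omegaTilde
    rw [← MeasureTheory.setIntegral_union (Set.Ioc_disjoint_Ioc_of_le le_rfl) measurableSet_Ioc
      (h.integrableOn s) ((h.integrableOn t).mono_set (Set.Ioc_subset_Ioc_left hs)),
      Set.Ioc_union_Ioc_eq_Ioc hs hst]
  have h2 : ∫ _ in Set.Ioc s t, ω s / t ≤ ∫ x in Set.Ioc s t, ω x / x := by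
    apply MeasureTheory.setIntegral_mono_on
    · simp
    · exact (h.integrableOn t).mono_set (Set.Ioc_subset_Ioc_left hs)
    · exact measurableSet_Ioc
    · intro x hx
      have hx0 : 0 < x := lt_of_le_of_lt hs hx.1
      have := h.1.2.1 (Set.mem_Ici.2 hs) (Set.mem_Ici.2 hx0.le) hx.1.le
      have := h.1.nonneg hs
      exact div_le_div₀ (by linarith) (by linarith) hx0 hx.2
  simp only [MeasureTheory.integral_const, smul_eq_mul] at h2
  rw [MeasureTheory.measureReal_restrict_apply_univ, Real.volume_real_Ioc_of_le hst] at h2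
  have e2 : (1 - s / t) * ω s = (t - s) * (ω s / t) := by field_simp
  linarith

lemma omegaTilde_nonneg {ω : ℝ → ℝ} (h : DiniMajorant ω) (t : ℝ) : 0 ≤ omegaTilde ω t :=
  MeasureTheory.setIntegral_nonneg measurableSet_Ioc fun _ hx =>
    div_nonneg (h.1.nonneg hx.1.le) hx.1.le

lemma DiniMajorant.mono {ω : ℝ → ℝ} (h : DiniMajorant ω) {s t : ℝ} (hs : 0 ≤ s) (hst : s ≤ t)
    (ht : 0 < t) : omegaTilde ω s ≤ omegaTilde ω t := by
  have := h.sub_le hs hst ht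
  have h1 : s / t ≤ 1 := by rw [div_le_one ht]; exact hst
  nlinarith [h.1.nonneg hs]

lemma DiniMajorant.le_omegaTilde {ω : ℝ → ℝ} (h : DiniMajorant ω) {t : ℝ} (ht : 0 < t) :
    ω t ≤ omegaTilde ω t := by
  have h2 : ∫ _ in Set.Ioc 0 t, ω t / t ≤ ∫ x in Set.Ioc 0 t, ω x / x := by
    apply MeasureTheory.setIntegral_mono_on
    · simp
    · exact h.integrableOn t
    · exact measurableSet_Ioc
    · intro x hx
      exact h.1.2.2.2 (Set.mem_Ioi.2 hx.1) (Set.mem_Ioi.2 ht) hx.2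
  simp only [MeasureTheory.integral_const, smul_eq_mul] at h2
  rw [MeasureTheory.measureReal_restrict_apply_univ, Real.volume_real_Ioc_of_le ht.le] at h2
  have e2 : (t - 0) * (ω t / t) = ω t := by field_simp; ring
  rw [e2] at h2
  exact h2

/-! ### The derivative bound -/

/-- Averaging `g` against the nonnegative trigonometric kernel `1 + Re (lam * e ^ (-iθ))`, whose
mean is `1`, reproduces `g 0 + lam * (R / 2) * g' 0`. -/
lemma norm_add_smul_deriv_le {X : Type*} [NormedAddCommGroup X] [NormedSpace ℂ X]
    [CompleteSpace X] {g : ℂ → X} {U : Set ℂ} (hU : IsOpen U) (hg : DifferentiableOn ℂ g U)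
    {R B : ℝ} (hR : 0 < R) (hRU : closedBall 0 R ⊆ U) (hB : ∀ ζ ∈ sphere (0 : ℂ) R, ‖g ζ‖ ≤ B)
    {lam : ℂ} (hlam : ‖lam‖ ≤ 1) :
    ‖g 0 + lam • ((R / 2 : ℂ) • deriv g 0)‖ ≤ B := by
  have hB0 : 0 ≤ B := (norm_nonneg _).trans (hB R (by simp [abs_of_pos hR]))
  have hRC : (R : ℂ) ≠ 0 := by exact_mod_cast hR.ne'
  have h0 : (0 : ℂ) ∈ ball (0 : ℂ) R := by simpa using hR
  have hgc := hg.mono hRU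
  have hgd : DiffContOnCl ℂ g (ball 0 R) := DifferentiableOn.diffContOnCl (hg.mono (by
    rwa [closure_ball _ hR.ne']))
  have i1 : (∮ ζ in C(0, R), ζ⁻¹ • g ζ) = (2 * Real.pi * Complex.I : ℂ) • g 0 := by
    simpa using hgd.circleIntegral_sub_inv_smul h0
  have i2 : (∮ ζ in C(0, R), (ζ ^ 2)⁻¹ • g ζ) = (2 * Real.pi * Complex.I : ℂ) • deriv g 0 := by
    have := Complex.two_pi_I_inv_smul_circleIntegral_sub_sq_inv_smul_of_differentiable
      hU hRU hg h0
    rw [← this, smul_smul, mul_inv_cancel₀ Complex.two_pi_I_ne_zero, one_smul]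
    simp
  have i3 : (∮ ζ in C(0, R), g ζ) = 0 := hgd.circleIntegral_eq_zero hR.le
  have hne : ∀ ζ ∈ sphere (0 : ℂ) R, ζ ≠ 0 := fun ζ hζ => ne_of_mem_sphere hζ hR.ne'
  have hcont : ContinuousOn g (sphere 0 R) := hgc.continuousOn.mono sphere_subset_closedBall
  have c1 : CircleIntegrable (fun ζ => ζ⁻¹ • g ζ) 0 R :=
    ContinuousOn.circleIntegrable hR.le
      ((continuousOn_id.inv₀ hne).smul hcont)
  have c2 : CircleIntegrable (fun ζ => (lam * (R / 2)) • (ζ ^ 2)⁻¹ • g ζ) 0 R :=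
    ContinuousOn.circleIntegrable hR.le
      (continuousOn_const.smul
        (((continuousOn_id.pow 2).inv₀ fun ζ hζ => pow_ne_zero 2 (hne ζ hζ)).smul hcont))
  have c3 : CircleIntegrable (fun ζ => (star lam / (2 * R)) • g ζ) 0 R :=
    ContinuousOn.circleIntegrable hR.le (continuousOn_const.smul hcont)
  -- On the circle this integrand is `ζ⁻¹ * (1 + Re (lam * R / ζ)) • g ζ`, written holomorphically.
  have key : (∮ ζ in C(0, R), (ζ⁻¹ • g ζ + (lam * (R / 2)) • (ζ ^ 2)⁻¹ • g ζ
      + (star lam / (2 * R)) • g ζ))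
      = (2 * Real.pi * Complex.I : ℂ) • (g 0 + lam • ((R / 2 : ℂ) • deriv g 0)) := by
    have c12 : CircleIntegrable (fun ζ => ζ⁻¹ • g ζ + (lam * (R / 2)) • (ζ ^ 2)⁻¹ • g ζ) 0 R :=
      c1.add c2
    rw [circleIntegral.integral_add c12 c3, circleIntegral.integral_add c1 c2,
      circleIntegral.integral_smul, circleIntegral.integral_smul, i1, i2, i3, smul_zero, add_zero,
      smul_add, smul_smul, smul_smul, smul_smul, mul_comm (lam * (R / 2)),
      mul_assoc _ lam]
  have bound : ‖∮ ζ in C(0, R), (ζ⁻¹ • g ζ + (lam * (R / 2)) • (ζ ^ 2)⁻¹ • g ζ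
      + (star lam / (2 * R)) • g ζ)‖ ≤ ∫ θ in (0 : ℝ)..2 * Real.pi,
        (1 + lam.re * Real.cos θ + lam.im * Real.sin θ) * B := by
    rw [circleIntegral]
    apply intervalIntegral.norm_integral_le_of_norm_le Real.two_pi_pos.le
    · refine Filter.Eventually.of_forall fun θ _ => ?_
      set ζ := circleMap 0 R θ with hζ
      have hζs : ζ ∈ sphere (0 : ℂ) R := circleMap_mem_sphere _ hR.le _
      have hζ0 := hne ζ hζs
      have hk : 0 ≤ 1 + lam.re * Real.cos θ + lam.im * Real.sin θ := by
        have h1 : lam.re ^ 2 + lam.im ^ 2 ≤ 1 := by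
          have := Complex.sq_norm lam
          rw [Complex.normSq_apply] at this
          nlinarith [norm_nonneg lam]
        nlinarith [Real.sin_sq_add_cos_sq θ, sq_nonneg (lam.re + Real.cos θ),
          sq_nonneg (lam.im + Real.sin θ)]
      have hexp : ζ = R * (Real.cos θ + Real.sin θ * Complex.I) := by
        rw [hζ, circleMap, zero_add, Complex.exp_mul_I, Complex.ofReal_cos, Complex.ofReal_sin]
      have hinv : (ζ / R) * (Real.cos θ - Real.sin θ * Complex.I) = 1 := by
        rw [hexp, mul_div_cancel_left₀ _ hRC]
        have : (Real.cos θ : ℂ) ^ 2 + (Real.sin θ : ℂ) ^ 2 = 1 := by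
          exact_mod_cast Real.cos_sq_add_sin_sq θ
        linear_combination this - (Real.sin θ : ℂ) ^ 2 * Complex.I_sq
      have hRz : (R : ℂ) / ζ = Real.cos θ - Real.sin θ * Complex.I := by
        rw [div_eq_iff hζ0]
        field_simp at hinv
        linear_combination -hinv
      -- The factor `ζ * I` is the derivative of the circle parametrization.
      have e : ζ * (ζ⁻¹ + (lam * (R / 2)) * (ζ ^ 2)⁻¹ + star lam / (2 * R))
          = ((1 + lam.re * Real.cos θ + lam.im * Real.sin θ : ℝ) : ℂ) := by
        have e1 : ζ * (ζ⁻¹ + (lam * (R / 2)) * (ζ ^ 2)⁻¹ + star lam / (2 * R))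
          = 1 + (lam * (R / ζ) + star lam * (ζ / R)) / 2 := by
          field_simp
          ring
        rw [e1, hRz, hexp, mul_div_cancel_left₀ _ hRC]
        apply Complex.ext <;> simp <;> ring
      rw [smul_smul, ← add_smul, ← add_smul, smul_smul, deriv_circleMap, ← hζ, mul_right_comm, e,
        norm_smul, norm_mul, Complex.norm_real, Complex.norm_I, mul_one, Real.norm_of_nonneg hk]
      exact mul_le_mul_of_nonneg_left (hB ζ hζs) hk
    · apply Continuous.intervalIntegrable
      fun_prop
  have hint : ∫ θ in (0 : ℝ)..2 * Real.pi,
        (1 + lam.re * Real.cos θ + lam.im * Real.sin θ) * B = 2 * Real.pi * B := by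
    rw [intervalIntegral.integral_mul_const, intervalIntegral.integral_add,
      intervalIntegral.integral_add] <;>
    first
    | (apply Continuous.intervalIntegrable; fun_prop)
    | simp
  rw [key, hint, norm_smul] at bound
  have hn : ‖(2 * Real.pi * Complex.I : ℂ)‖ = 2 * Real.pi := by
    simp [abs_of_pos Real.pi_pos]
  rw [hn] at bound
  exact le_of_mul_le_mul_left bound Real.two_pi_pos

/-- Uniform c-convexity in homogeneous form: the unit vector is replaced by a vector of norm at
most `K`. The vector `0` is covered by the comparison of `Ω` with a linear function. -/
lemma norm_le_of_uniformly_c_convex {X : Type*} [NormedAddCommGroup X] [NormedSpace ℂ X]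
    {Ω : ℝ → ℝ} (hΩpos : ∀ δ : ℝ, 0 < δ → 0 < Ω δ) (hΩ : Majorant Ω)
    (hucc : ∀ x y : X, ‖x‖ = 1 → ∀ δ : ℝ, 0 < δ →
      (∀ lam : ℂ, ‖lam‖ ≤ 1 → ‖x + lam • y‖ ≤ 1 + δ) → ‖y‖ ≤ Ω δ)
    {K c T : ℝ} (hK : 1 ≤ K) (hc : 1 ≤ c) (hT : 0 < T) (hT1 : T ≤ 1) {x y : X} (hx : ‖x‖ ≤ K)
    (h : ∀ lam : ℂ, ‖lam‖ ≤ 1 → ‖x + lam • y‖ ≤ ‖x‖ + c * T) :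
    ‖y‖ ≤ c * (K + 1 / Ω 1) * Ω T := by
  have hΩ1 := hΩpos 1 one_pos
  have hΩT := hΩpos T hT
  have hcΩ : 0 < c * Ω T := by positivity
  rcases eq_or_ne x 0 with rfl | hx0
  · have h1 := h 1 (by simp)
    simp only [zero_add, one_smul, norm_zero] at h1
    have h2 : Ω 1 ≤ 1 / T * Ω T := by
      have := hΩ.mul_le (c := 1 / T) (t := T) (by rw [le_div_iff₀ hT]; linarith) hT
      rwa [one_div_mul_cancel hT.ne'] at this
    have h3 : T ≤ 1 / Ω 1 * Ω T := by
      have h4 : T * Ω 1 ≤ Ω T := by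
        have := mul_le_mul_of_nonneg_left h2 hT.le
        rwa [← mul_assoc, mul_one_div_cancel hT.ne', one_mul] at this
      rw [one_div_mul_eq_div, le_div_iff₀ hΩ1]
      exact h4
    calc ‖y‖ ≤ c * T := h1
      _ ≤ c * (1 / Ω 1 * Ω T) := by gcongr
      _ ≤ c * (K + 1 / Ω 1) * Ω T := by nlinarith
  · have hM : 0 < ‖x‖ := norm_pos_iff.2 hx0
    have hMC : (‖x‖ : ℂ) ≠ 0 := by exact_mod_cast hM.ne'
    have hn : ‖(‖x‖ : ℂ)⁻¹‖ = ‖x‖⁻¹ := by simp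
    have h1 := hucc ((‖x‖ : ℂ)⁻¹ • x) ((‖x‖ : ℂ)⁻¹ • y)
      (by rw [norm_smul, hn, inv_mul_cancel₀ hM.ne']) (c * T / ‖x‖) (by positivity) (by
        intro lam hl
        rw [smul_comm, ← smul_add, norm_smul, hn]
        calc ‖x‖⁻¹ * ‖x + lam • y‖ ≤ ‖x‖⁻¹ * (‖x‖ + c * T) := by gcongr; exact h lam hl
          _ = 1 + c * T / ‖x‖ := by field_simp)
    rw [norm_smul, hn, inv_mul_eq_div, div_le_iff₀ hM] at h1
    have e : c * T / ‖x‖ = (K / ‖x‖) * (c * T / K) := by field_simp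
    have h2 : Ω (c * T / ‖x‖) ≤ K / ‖x‖ * Ω (c * T / K) := by
      rw [e]
      exact hΩ.mul_le (by rw [le_div_iff₀ hM]; linarith) (by positivity)
    have h3 : Ω (c * T / K) ≤ Ω (c * T) :=
      hΩ.2.1 (Set.mem_Ici.2 (by positivity)) (Set.mem_Ici.2 (by positivity))
        (div_le_self (by positivity) hK)
    have h4 := hΩ.mul_le hc hT
    calc ‖y‖ ≤ Ω (c * T / ‖x‖) * ‖x‖ := h1
      _ ≤ (K / ‖x‖ * Ω (c * T / K)) * ‖x‖ := by gcongr
      _ = K * Ω (c * T / K) := by field_simp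
      _ ≤ K * (c * Ω T) := by gcongr; linarith
      _ ≤ c * (K + 1 / Ω 1) * Ω T := by
        have : 0 ≤ 1 / Ω 1 * (c * Ω T) := by positivity
        nlinarith

/-- The growth estimate for the derivative. Circles of radius `r / 2` around `z` stay inside the
ball even when `r = 1 - ‖z‖`, which is why the constant is `4` rather than `2`. -/
lemma norm_fderiv_le {X E : Type*} [NormedAddCommGroup X] [NormedSpace ℂ X] [CompleteSpace X]
    [NormedAddCommGroup E] [NormedSpace ℂ E]
    {Ω : ℝ → ℝ} (hΩpos : ∀ δ : ℝ, 0 < δ → 0 < Ω δ) (hΩ : Majorant Ω)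
    (hucc : ∀ x y : X, ‖x‖ = 1 → ∀ δ : ℝ, 0 < δ →
      (∀ lam : ℂ, ‖lam‖ ≤ 1 → ‖x + lam • y‖ ≤ 1 + δ) → ‖y‖ ≤ Ω δ)
    {α : ℝ} (hα0 : 0 < α) {f : E → X} (hf : DifferentiableOn ℂ f (ball 0 1))
    {K c : ℝ} (hK : 1 ≤ K) (hc : 1 ≤ c) (hfK : ∀ z ∈ ball (0 : E) 1, ‖f z‖ ≤ K)
    (hΛ : ∀ z ∈ ball (0 : E) 1, ∀ w ∈ ball (0 : E) 1, |‖f z‖ - ‖f w‖| ≤ c * ‖z - w‖ ^ α)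
    {z : E} {r : ℝ} (hr : 0 < r) (hz : ‖z‖ ≤ 1 - r) :
    ‖fderiv ℂ f z‖ ≤ 4 * c * (K + 1 / Ω 1) * Ω (r ^ α) / r := by
  have hΩ1 := hΩpos 1 one_pos
  have hr1 : r ≤ 1 := by linarith [norm_nonneg z]
  have hzb : z ∈ ball (0 : E) 1 := by rw [mem_ball_zero_iff]; linarith
  have hT : 0 < r ^ α := Real.rpow_pos_of_pos hr α
  have hΩT := hΩpos _ hT
  apply ContinuousLinearMap.opNorm_le_of_unit_norm (𝕜 := ℂ) (by positivity)
  intro h hh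
  let U : Set ℂ := ball 0 r
  have hmaps : ∀ ζ ∈ U, z + ζ • h ∈ ball (0 : E) 1 := by
    intro ζ hζ
    rw [mem_ball_zero_iff] at hζ ⊢
    calc ‖z + ζ • h‖ ≤ ‖z‖ + ‖ζ • h‖ := norm_add_le _ _
      _ < 1 := by rw [norm_smul, hh]; linarith
  have hg : DifferentiableOn ℂ (fun ζ : ℂ => f (z + ζ • h)) U :=
    hf.comp (by fun_prop) hmaps
  have hd : deriv (fun ζ : ℂ => f (z + ζ • h)) 0 = fderiv ℂ f z h := by
    have h1 : HasFDerivAt f (fderiv ℂ f z) (z + (0 : ℂ) • h) := by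
      rw [zero_smul, add_zero]
      exact (hf.differentiableAt (isOpen_ball.mem_nhds hzb)).hasFDerivAt
    have h2 : HasDerivAt (fun ζ : ℂ => z + ζ • h) h 0 := by
      simpa using ((hasDerivAt_id (0 : ℂ)).smul_const h).const_add z
    exact (h1.comp_hasDerivAt 0 h2).deriv
  have hy : ‖((r / 2 : ℝ) / 2 : ℂ) • fderiv ℂ f z h‖ ≤ c * (K + 1 / Ω 1) * Ω (r ^ α) := by
    refine norm_le_of_uniformly_c_convex hΩpos hΩ hucc hK hc hT
      (Real.rpow_le_one hr.le hr1 hα0.le) (hfK z hzb) fun lam hlam => ?_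
    have := norm_add_smul_deriv_le (g := fun ζ : ℂ => f (z + ζ • h)) (R := r / 2)
      (B := ‖f z‖ + c * r ^ α) isOpen_ball hg (by positivity)
      (closedBall_subset_ball (by linarith)) ?_ hlam
    · rw [hd] at this
      simpa using this
    · intro ζ hζ
      have hn : ‖ζ‖ = r / 2 := by simpa using hζ
      have h1 := hΛ (z + ζ • h) (hmaps ζ (by rw [mem_ball_zero_iff]; linarith)) z hzb
      rw [add_sub_cancel_left, norm_smul, hh, hn, mul_one] at h1
      have h2 : (r / 2) ^ α ≤ r ^ α := Real.rpow_le_rpow (by positivity) (by linarith) hα0.le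
      have h3 := (abs_le.1 h1).2
      nlinarith
  have hn : ‖((r / 2 : ℝ) / 2 : ℂ)‖ = r / 4 := by
    rw [norm_div, Complex.norm_real, Real.norm_of_nonneg (by positivity)]
    norm_num
    ring
  rw [norm_smul, hn] at hy
  rw [le_div_iff₀ hr]
  linarith

/-! ### Integration of the derivative bound -/

/-- Chaining along the radial points `(1 - t / 2 ^ k) • a`; the resulting dyadic sum of values of
`Ω` telescopes against `Ω̃`. -/
lemma norm_sub_radial_le {X E : Type*} [NormedAddCommGroup X] [NormedAddCommGroup E]
    [NormedSpace ℝ E] {Ω : ℝ → ℝ} (hΩ : DiniMajorant Ω) {α C : ℝ} (hα0 : 0 < α) (hC : 0 ≤ C)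
    {f : E → X} (hf : ContinuousOn f (ball 0 1))
    (hloc : ∀ r : ℝ, 0 < r → ∀ u v : E, ‖u‖ ≤ 1 - r → ‖v‖ ≤ 1 - r → ‖u - v‖ ≤ r →
      ‖f u - f v‖ ≤ C * Ω (r ^ α))
    {a : E} (ha : a ∈ ball (0 : E) 1) {t : ℝ} (ht : 0 < t) (ht1 : t ≤ 1) :
    ‖f a - f ((1 - t) • a)‖ ≤ C / (1 - (1 / 2) ^ α) * omegaTilde Ω (t ^ α) := by
  set q : ℝ := (1 / 2) ^ α with hq
  have hq0 : 0 < q := by positivity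
  have hq1 : q < 1 := Real.rpow_lt_one (by norm_num) (by norm_num) hα0
  have ha1 : ‖a‖ < 1 := by simpa using ha
  have hpow : ∀ k : ℕ, (t * (1 / 2) ^ k) ^ α = q ^ k * t ^ α := by
    intro k
    rw [Real.mul_rpow ht.le (by positivity), ← Real.rpow_natCast_mul (by norm_num), mul_comm,
      mul_comm (k : ℝ), Real.rpow_mul_natCast (by norm_num)]
  have hT : 0 < t ^ α := by positivity
  have step : ∀ N : ℕ, ‖f ((1 - t * (1 / 2) ^ N) • a) - f ((1 - t) • a)‖
      ≤ C / (1 - q) * (omegaTilde Ω (t ^ α) - omegaTilde Ω (q ^ N * t ^ α)) := by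
    intro N
    induction N with
    | zero => simp
    | succ k ih =>
      set r : ℝ := t * (1 / 2) ^ (k + 1) with hr
      have hr2 : t * (1 / 2) ^ k = 2 * r := by rw [hr]; ring
      have hrpos : 0 < r := by positivity
      have hr2t : 2 * r ≤ 1 := by
        rw [← hr2]
        have : (1 / 2 : ℝ) ^ k ≤ 1 := pow_le_one₀ (by norm_num) (by norm_num)
        nlinarith [pow_pos (show (0 : ℝ) < 1 / 2 by norm_num) k]
      have h1 := hloc r hrpos ((1 - r) • a) ((1 - 2 * r) • a)
        (by rw [norm_smul, Real.norm_of_nonneg (by linarith)]; nlinarith [norm_nonneg a])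
        (by rw [norm_smul, Real.norm_of_nonneg (by linarith)]; nlinarith [norm_nonneg a])
        (by
          rw [← sub_smul, norm_smul, Real.norm_of_nonneg (by linarith)]
          nlinarith [norm_nonneg a])
      rw [hr2] at ih
      have h2 := hΩ.sub_le (s := q ^ (k + 1) * t ^ α) (t := q ^ k * t ^ α) (by positivity)
        (by rw [pow_succ]; nlinarith [mul_pos (pow_pos hq0 k) hT]) (by positivity)
      have e : q ^ (k + 1) * t ^ α / (q ^ k * t ^ α) = q := by
        field_simp
        ring
      rw [e] at h2
      rw [hr, hpow, ← hr] at h1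
      have h3 : C * Ω (q ^ (k + 1) * t ^ α) ≤ C / (1 - q) *
          (omegaTilde Ω (q ^ k * t ^ α) - omegaTilde Ω (q ^ (k + 1) * t ^ α)) := by
        have h4 := mul_le_mul_of_nonneg_left h2 (div_nonneg hC (sub_pos.2 hq1).le)
        have e2 : C / (1 - q) * ((1 - q) * Ω (q ^ (k + 1) * t ^ α))
            = C * Ω (q ^ (k + 1) * t ^ α) := by
          have : 1 - q ≠ 0 := (sub_pos.2 hq1).ne'
          field_simp
        rwa [e2] at h4
      have h5 := norm_sub_le_norm_sub_add_norm_sub (f ((1 - r) • a)) (f ((1 - 2 * r) • a))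
        (f ((1 - t) • a))
      linarith
  have hlim : Tendsto (fun N : ℕ => ‖f ((1 - t * (1 / 2) ^ N) • a) - f ((1 - t) • a)‖) atTop
      (nhds ‖f a - f ((1 - t) • a)‖) := by
    have h1 : Tendsto (fun N : ℕ => (1 - t * (1 / 2) ^ N) • a) atTop (nhds a) := by
      have := ((((tendsto_pow_atTop_nhds_zero_of_lt_one (r := (1 / 2 : ℝ)) (by norm_num)
        (by norm_num)).const_mul t).const_sub 1).smul_const a)
      simpa using this
    have h2 := (hf.continuousAt (isOpen_ball.mem_nhds ha)).tendsto.comp h1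
    exact (h2.sub_const _).norm
  refine le_of_tendsto' hlim fun N => (step N).trans ?_
  have := omegaTilde_nonneg hΩ (q ^ N * t ^ α)
  have h6 : 0 ≤ C / (1 - q) := div_nonneg hC (sub_pos.2 hq1).le
  exact mul_le_mul_of_nonneg_left (by linarith) h6

theorem lipschitz_modulus_implies_lipschitz_tilde
    {X : Type*} [NormedAddCommGroup X] [NormedSpace ℂ X] [CompleteSpace X]
    (n : ℕ) (hn : 1 ≤ n)
    (Ω : ℝ → ℝ) (hΩpos : ∀ δ : ℝ, 0 < δ → 0 < Ω δ)
    (hΩdini : DiniMajorant Ω)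
    (hucc : ∀ x y : X, ‖x‖ = 1 → ∀ δ : ℝ, 0 < δ →
      (∀ lam : ℂ, ‖lam‖ ≤ 1 → ‖x + lam • y‖ ≤ 1 + δ) → ‖y‖ ≤ Ω δ)
    (α : ℝ) (hα0 : 0 < α) (hα1 : α ≤ 1)
    (f : EuclideanSpace ℂ (Fin n) → X)
    (hf : DifferentiableOn ℂ f (Metric.ball 0 1))
    (hΛ : ∃ c : ℝ, ∀ z ∈ Metric.ball (0 : EuclideanSpace ℂ (Fin n)) 1,
      ∀ w ∈ Metric.ball (0 : EuclideanSpace ℂ (Fin n)) 1,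
        |‖f z‖ - ‖f w‖| ≤ c * ‖z - w‖ ^ α) :
    ∃ C : ℝ, ∀ a ∈ Metric.ball (0 : EuclideanSpace ℂ (Fin n)) 1,
      ∀ b ∈ Metric.ball (0 : EuclideanSpace ℂ (Fin n)) 1,
        ‖f a - f b‖ ≤ C * omegaTilde Ω (‖a - b‖ ^ α) := by
  obtain ⟨c₀, hc₀⟩ := hΛ
  obtain ⟨c, hc, hΛ⟩ : ∃ c : ℝ, 1 ≤ c ∧ ∀ z ∈ ball (0 : EuclideanSpace ℂ (Fin n)) 1,
      ∀ w ∈ ball (0 : EuclideanSpace ℂ (Fin n)) 1, |‖f z‖ - ‖f w‖| ≤ c * ‖z - w‖ ^ α :=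
    ⟨max c₀ 1, le_max_right _ _, fun z hz w hw => (hc₀ z hz w hw).trans
      (mul_le_mul_of_nonneg_right (le_max_left _ _) (by positivity))⟩
  have h0 : (0 : EuclideanSpace ℂ (Fin n)) ∈ ball (0 : EuclideanSpace ℂ (Fin n)) 1 := by simp
  obtain ⟨K, hK, hfK⟩ : ∃ K : ℝ, 1 ≤ K ∧ ∀ z ∈ ball (0 : EuclideanSpace ℂ (Fin n)) 1,
      ‖f z‖ ≤ K := by
    refine ⟨‖f 0‖ + c, by linarith [norm_nonneg (f 0)], fun z hz => ?_⟩
    have h1 := (abs_le.1 (hΛ z hz 0 h0)).2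
    rw [sub_zero] at h1
    have h2 : ‖z‖ ^ α ≤ 1 :=
      Real.rpow_le_one (norm_nonneg z) (mem_ball_zero_iff.1 hz).le hα0.le
    nlinarith
  have hΩ1 := hΩpos 1 one_pos
  set C : ℝ := 4 * c * (K + 1 / Ω 1) with hCdef
  have hC : 0 ≤ C := by positivity
  have hloc : ∀ r : ℝ, 0 < r → ∀ u v : EuclideanSpace ℂ (Fin n), ‖u‖ ≤ 1 - r → ‖v‖ ≤ 1 - r →
      ‖u - v‖ ≤ r → ‖f u - f v‖ ≤ C * Ω (r ^ α) := by
    intro r hr u v hu hv huv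
    have hconv := convex_closedBall (0 : EuclideanSpace ℂ (Fin n)) (1 - r)
    have h1 := hconv.norm_image_sub_le_of_norm_fderiv_le (𝕜 := ℂ) (f := f) (C := C * Ω (r ^ α) / r) (x := v) (y := u)
      (fun z hz => hf.differentiableAt (isOpen_ball.mem_nhds
        (closedBall_subset_ball (by linarith) hz)))
      (fun z hz => norm_fderiv_le hΩpos hΩdini.1 hucc hα0 hf hK hc hfK hΛ hr
        (mem_closedBall_zero_iff.1 hz))
      (mem_closedBall_zero_iff.2 hv) (mem_closedBall_zero_iff.2 hu)
    have h2 : 0 ≤ C * Ω (r ^ α) := mul_nonneg hC (hΩdini.1.nonneg (by positivity))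
    calc ‖f u - f v‖ ≤ C * Ω (r ^ α) / r * ‖u - v‖ := h1
      _ ≤ C * Ω (r ^ α) / r * r := by gcongr
      _ = C * Ω (r ^ α) := by field_simp
  set D : ℝ := C / (1 - (1 / 2) ^ α) with hD
  have hD0 : 0 ≤ D :=
    div_nonneg hC (sub_nonneg.2 (Real.rpow_le_one (by norm_num) (by norm_num) hα0.le))
  refine ⟨2 * D + C + 2 * K / Ω 1, fun a ha b hb => ?_⟩
  have hE : 0 ≤ 2 * K / Ω 1 := by positivity
  rcases eq_or_ne a b with rfl | hab
  · rw [sub_self, norm_zero]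
    exact mul_nonneg (by positivity) (omegaTilde_nonneg hΩdini _)
  set t := ‖a - b‖ with ht
  have ht0 : 0 < t := norm_pos_iff.2 (sub_ne_zero.2 hab)
  have hT : 0 < t ^ α := Real.rpow_pos_of_pos ht0 α
  have hW := omegaTilde_nonneg hΩdini (t ^ α)
  rcases le_total t 1 with ht1 | ht1
  · have ha1 := mem_ball_zero_iff.1 ha
    have hb1 := mem_ball_zero_iff.1 hb
    have h1 := norm_sub_radial_le hΩdini hα0 hC hf.continuousOn hloc ha ht0 ht1
    have h2 := norm_sub_radial_le hΩdini hα0 hC hf.continuousOn hloc hb ht0 ht1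
    have h3 := hloc t ht0 ((1 - t) • a) ((1 - t) • b)
      (by rw [norm_smul, Real.norm_of_nonneg (by linarith)]; nlinarith)
      (by rw [norm_smul, Real.norm_of_nonneg (by linarith)]; nlinarith)
      (by rw [← smul_sub, norm_smul, Real.norm_of_nonneg (by linarith), ← ht]; nlinarith)
    have h4 := mul_le_mul_of_nonneg_left (hΩdini.le_omegaTilde hT) hC
    have h5 := norm_sub_le_norm_sub_add_norm_sub (f a) (f ((1 - t) • a)) (f b)
    have h6 := norm_sub_le_norm_sub_add_norm_sub (f ((1 - t) • a)) (f ((1 - t) • b)) (f b)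
    rw [norm_sub_rev] at h2
    have h7 := mul_nonneg hE hW
    rw [← hD] at h1 h2
    linarith
  · -- For `t ≥ 1` boundedness of `f` suffices, since `Ω̃ (t ^ α) ≥ Ω̃ 1 ≥ Ω 1 > 0`.
    have h1 : (1 : ℝ) ≤ t ^ α := Real.one_le_rpow ht1 hα0.le
    have h2 : Ω 1 ≤ omegaTilde Ω (t ^ α) :=
      (hΩdini.le_omegaTilde one_pos).trans (hΩdini.mono zero_le_one h1 hT)
    have h3 : ‖f a - f b‖ ≤ 2 * K := by
      linarith [norm_sub_le (f a) (f b), hfK a ha, hfK b hb]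
    have h4 : 2 * K ≤ 2 * K / Ω 1 * omegaTilde Ω (t ^ α) := by
      calc 2 * K = 2 * K / Ω 1 * Ω 1 := by field_simp
        _ ≤ _ := by gcongr
    have h5 : 0 ≤ (2 * D + C) * omegaTilde Ω (t ^ α) := by positivity
    linarith
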